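/- Let p ≥ 1 and let (Z_n)_{n≥1} be a sequence of random variables on (Ω, 𝒜) such that sup_{n≥1} E̅[|Z_n|^{p+1}] < ∞. Assume that for every bounded continuous function φ₁ : ℝ → ℝ with compact support the limit lim_{n→∞} E̅[φ₁(Z_n)] exists. Then for every continuous function φ : ℝ → ℝ satisfying |φ(x)| ≤ C(1 + |x|^p) for some C > 0, the sequence (E̅[φ(Z_n)])_{n≥1} is convergent. -/

import Mathlib

open MeasureTheory Filter Topology

/-- Upper expectation `E̅[X] = sup_{P ∈ 𝒬} E_P[X]` of a set of probability measures. -/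
noncomputable def upperExp {Ω : Type*} [MeasurableSpace Ω]
    (𝒬 : Set (Measure Ω)) (X : Ω → ℝ) : ℝ :=
  sSup ((fun P : Measure Ω => ∫ ω, X ω ∂P) '' 𝒬)

/-- `E̅[X]` is finite: `X` is integrable under each `P ∈ 𝒬` and the
integrals are bounded above. -/
def HasFiniteUpperExp {Ω : Type*} [MeasurableSpace Ω]
    (𝒬 : Set (Measure Ω)) (X : Ω → ℝ) : Prop :=
  (∀ P ∈ 𝒬, Integrable X P) ∧ BddAbove ((fun P : Measure Ω => ∫ ω, X ω ∂P) '' 𝒬)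

/-!
Since `|x| ^ p` is negligible against `|x| ^ (p + 1)` at infinity, multiplying `φ` by a compactly
supported cutoff equal to `1` on a large compact set changes it by at most `ε * |x| ^ (p + 1)`
everywhere. Sublinearity of the upper expectation and the moment bound then make the sequence for
`φ` uniformly close to a convergent one, so it is Cauchy. The same argument applies to any
`φ = o(ψ)` at infinity, for a nonnegative `ψ` whose upper expectations along the sequence are
bounded.
-/

section UpperExpectation

variable {Ω : Type*} [MeasurableSpace Ω] {𝒬 : Set (Measure Ω)} {X Y W : Ω → ℝ}

lemma HasFiniteUpperExp.integral_le_upperExp (hX : HasFiniteUpperExp 𝒬 X) {P : Measure Ω}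
    (hP : P ∈ 𝒬) : ∫ ω, X ω ∂P ≤ upperExp 𝒬 X :=
  le_csSup hX.2 (Set.mem_image_of_mem _ hP)

lemma upperExp_le (h𝒬 : 𝒬.Nonempty) {c : ℝ} (h : ∀ P ∈ 𝒬, ∫ ω, X ω ∂P ≤ c) :
    upperExp 𝒬 X ≤ c :=
  csSup_le (h𝒬.image _) (Set.forall_mem_image.2 h)

lemma integral_le_upperExp_add_upperExp (hY : HasFiniteUpperExp 𝒬 Y) (hW : HasFiniteUpperExp 𝒬 W)
    {P : Measure Ω} (hP : P ∈ 𝒬) (hX : Integrable X P) (h : ∀ ω, X ω ≤ Y ω + W ω) :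
    ∫ ω, X ω ∂P ≤ upperExp 𝒬 Y + upperExp 𝒬 W :=
  calc ∫ ω, X ω ∂P
    _ ≤ ∫ ω, Y ω + W ω ∂P := integral_mono hX ((hY.1 P hP).add (hW.1 P hP)) h
    _ = ∫ ω, Y ω ∂P + ∫ ω, W ω ∂P := integral_add (hY.1 P hP) (hW.1 P hP)
    _ ≤ upperExp 𝒬 Y + upperExp 𝒬 W :=
      add_le_add (hY.integral_le_upperExp hP) (hW.integral_le_upperExp hP)

lemma upperExp_le_add_of_le (h𝒬 : 𝒬.Nonempty) (hX : ∀ P ∈ 𝒬, Integrable X P)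
    (hY : HasFiniteUpperExp 𝒬 Y) (hW : HasFiniteUpperExp 𝒬 W) (h : ∀ ω, X ω ≤ Y ω + W ω) :
    upperExp 𝒬 X ≤ upperExp 𝒬 Y + upperExp 𝒬 W :=
  upperExp_le h𝒬 fun P hP ↦ integral_le_upperExp_add_upperExp hY hW hP (hX P hP) h

lemma abs_upperExp_sub_le (h𝒬 : 𝒬.Nonempty) (hX : HasFiniteUpperExp 𝒬 X)
    (hY : HasFiniteUpperExp 𝒬 Y) (hW : HasFiniteUpperExp 𝒬 W) (h : ∀ ω, |X ω - Y ω| ≤ W ω) :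
    |upperExp 𝒬 X - upperExp 𝒬 Y| ≤ upperExp 𝒬 W := by
  rw [abs_sub_le_iff, sub_le_iff_le_add', sub_le_iff_le_add']
  exact ⟨upperExp_le_add_of_le h𝒬 hX.1 hY hW fun ω ↦
      sub_le_iff_le_add'.1 (abs_sub_le_iff.1 (h ω)).1,
    upperExp_le_add_of_le h𝒬 hY.1 hX hW fun ω ↦
      sub_le_iff_le_add'.1 (abs_sub_le_iff.1 (h ω)).2⟩

lemma HasFiniteUpperExp.of_abs_sub_le (hX : HasFiniteUpperExp 𝒬 X) (hW : HasFiniteUpperExp 𝒬 W)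
    (hY : ∀ P ∈ 𝒬, AEStronglyMeasurable Y P) (h : ∀ ω, |X ω - Y ω| ≤ W ω) :
    HasFiniteUpperExp 𝒬 Y := by
  have hint : ∀ P ∈ 𝒬, Integrable Y P := fun P hP ↦ by
    have hsub : Integrable (X - Y) P :=
      (hW.1 P hP).mono' ((hX.1 P hP).aestronglyMeasurable.sub (hY P hP)) (.of_forall h)
    simpa only [sub_sub_cancel] using (hX.1 P hP).sub hsub
  refine ⟨hint, upperExp 𝒬 X + upperExp 𝒬 W, Set.forall_mem_image.2 fun P hP ↦ ?_⟩
  exact integral_le_upperExp_add_upperExp hX hW hP (hint P hP) fun ω ↦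
    sub_le_iff_le_add'.1 (abs_sub_le_iff.1 (h ω)).2

lemma HasFiniteUpperExp.const_mul (hX : HasFiniteUpperExp 𝒬 X) {c : ℝ} (hc : 0 ≤ c) :
    HasFiniteUpperExp 𝒬 (fun ω ↦ c * X ω) := by
  refine ⟨fun P hP ↦ (hX.1 P hP).const_mul c, c * upperExp 𝒬 X,
    Set.forall_mem_image.2 fun P hP ↦ ?_⟩
  rw [integral_const_mul]
  exact mul_le_mul_of_nonneg_left (hX.integral_le_upperExp hP) hc

lemma upperExp_const_mul {c : ℝ} (hc : 0 ≤ c) :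
    upperExp 𝒬 (fun ω ↦ c * X ω) = c * upperExp 𝒬 X := by
  simp only [upperExp, integral_const_mul, sSup_image', Real.mul_iSup_of_nonneg hc]

end UpperExpectation

section Growth

open Asymptotics

lemma isLittleO_rpow_rpow_atTop_of_lt {p q : ℝ} (hpq : p < q) :
    (fun x : ℝ ↦ x ^ p) =o[atTop] fun x : ℝ ↦ x ^ q := by
  have hpos : ∀ᶠ x : ℝ in atTop, 0 < x := eventually_gt_atTop 0
  have hne : ∀ᶠ x : ℝ in atTop, x ^ q = 0 → x ^ p = 0 :=
    hpos.mono fun x hx hzero ↦ absurd hzero (Real.rpow_pos_of_pos hx q).ne'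
  refine (isLittleO_iff_tendsto' hne).2 <|
    (tendsto_rpow_neg_atTop (sub_pos.2 hpq)).congr' (hpos.mono fun x hx ↦ ?_)
  rw [neg_sub, Real.rpow_sub hx]

lemma isLittleO_norm_rpow_cocompact_of_norm_le {E F : Type*} [SeminormedAddGroup E] [ProperSpace E]
    [Norm F] {φ : E → F} {C p q : ℝ} (hφ : ∀ x, ‖φ x‖ ≤ C * (1 + ‖x‖ ^ p)) (hq : 0 < q)
    (hpq : p < q) : φ =o[cocompact E] fun x : E ↦ ‖x‖ ^ q := by
  have hone : (fun _ : ℝ ↦ (1 : ℝ)) =o[atTop] fun x : ℝ ↦ x ^ q := by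
    simpa only [Real.rpow_zero] using isLittleO_rpow_rpow_atTop_of_lt hq
  have hsum : (fun x : E ↦ 1 + ‖x‖ ^ p) =o[cocompact E] fun x : E ↦ ‖x‖ ^ q :=
    (hone.add (isLittleO_rpow_rpow_atTop_of_lt hpq)).comp_tendsto tendsto_norm_cocompact_atTop
  refine (IsBigO.of_bound C (.of_forall fun x ↦ ?_)).trans_isLittleO hsum
  rw [Real.norm_of_nonneg (by positivity)]
  exact hφ x

lemma exists_cutoff_abs_sub_mul_le {X : Type*} [TopologicalSpace X] [R1Space X]
    [LocallyCompactSpace X] {φ ψ : X → ℝ} (hψ : 0 ≤ ψ) (hφψ : φ =o[cocompact X] ψ)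
    {ε : ℝ} (hε : 0 < ε) :
    ∃ χ : C(X, ℝ), HasCompactSupport χ ∧ ∀ x, |φ x - φ x * χ x| ≤ ε * ψ x := by
  obtain ⟨K, hK, hbound⟩ := mem_cocompact.1 (hφψ.def hε)
  obtain ⟨χ, hχ_one, hχ_supp, -, hχ_mem⟩ :=
    exists_continuousMap_one_of_isCompact_subset_isOpen hK isOpen_univ K.subset_univ
  refine ⟨χ, hχ_supp, fun x ↦ ?_⟩
  by_cases hx : x ∈ K
  · rw [hχ_one hx, Pi.one_apply, mul_one, sub_self, abs_zero]
    exact mul_nonneg hε.le (hψ x)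
  · calc |φ x - φ x * χ x|
      _ = |φ x| * (1 - χ x) := by
        rw [← mul_one_sub, abs_mul, abs_of_nonneg (sub_nonneg.2 (hχ_mem x).2)]
      _ ≤ |φ x| := mul_le_of_le_one_right (abs_nonneg _) (sub_le_self _ (hχ_mem x).1)
      _ ≤ ε * ψ x := (hbound hx).trans_eq (by rw [Real.norm_of_nonneg (hψ x)])

end Growth

lemma exists_tendsto_of_forall_exists_dist_le {ι E : Type*} [PseudoMetricSpace E] [CompleteSpace E]
    {l : Filter ι} [l.NeBot] {f : ι → E}
    (h : ∀ ε > 0, ∃ g : ι → E, (∃ a, Tendsto g l (𝓝 a)) ∧ ∀ᶠ i in l, dist (f i) (g i) ≤ ε) :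
    ∃ a, Tendsto f l (𝓝 a) := by
  refine cauchy_map_iff_exists_tendsto.1 (Metric.cauchy_iff.2 ⟨inferInstance, fun ε hε ↦ ?_⟩)
  obtain ⟨g, ⟨a, hg⟩, hfg⟩ := h (ε / 4) (by positivity)
  have hga : ∀ᶠ i in l, dist (g i) a < ε / 4 := Metric.tendsto_nhds.1 hg _ (by positivity)
  have hfa : ∀ᶠ i in l, f i ∈ Metric.ball a (ε / 2) := by
    filter_upwards [hfg, hga] with i hfg hga
    calc dist (f i) a
      _ ≤ dist (f i) (g i) + dist (g i) a := dist_triangle _ _ _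
      _ < ε / 2 := by linarith
  refine ⟨Metric.ball a (ε / 2), hfa, fun x hx y hy ↦ ?_⟩
  calc dist x y
    _ ≤ dist x a + dist y a := dist_triangle_right _ _ _
    _ < ε := by linarith [Metric.mem_ball.1 hx, Metric.mem_ball.1 hy]

section Convergence

open Asymptotics

variable {Ω X ι : Type*} [MeasurableSpace Ω] [TopologicalSpace X] [R1Space X]
  [LocallyCompactSpace X] [MeasurableSpace X] [OpensMeasurableSpace X]
  {𝒬 : Set (Measure Ω)} {φ ψ : X → ℝ}

lemma exists_hasCompactSupport_abs_upperExp_sub_le (h𝒬 : 𝒬.Nonempty) (hφ : Continuous φ)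
    (hψ : 0 ≤ ψ) (hφψ : φ =o[cocompact X] ψ) {ε : ℝ} (hε : 0 < ε) :
    ∃ φ₁ : X → ℝ, Continuous φ₁ ∧ HasCompactSupport φ₁ ∧ ∀ Z : Ω → X, Measurable Z →
      HasFiniteUpperExp 𝒬 (fun ω ↦ ψ (Z ω)) → HasFiniteUpperExp 𝒬 (fun ω ↦ φ (Z ω)) →
      |upperExp 𝒬 (fun ω ↦ φ (Z ω)) - upperExp 𝒬 (fun ω ↦ φ₁ (Z ω))| ≤
        ε * upperExp 𝒬 (fun ω ↦ ψ (Z ω)) := by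
  obtain ⟨χ, hχ, hle⟩ := exists_cutoff_abs_sub_mul_le hψ hφψ hε
  have hφχ : Continuous fun x ↦ φ x * χ x := hφ.mul χ.continuous
  refine ⟨fun x ↦ φ x * χ x, hφχ, hχ.mul_left, fun Z hZ hψZ hφZ ↦ ?_⟩
  have hεψZ := hψZ.const_mul hε.le
  have hφχZ : HasFiniteUpperExp 𝒬 (fun ω ↦ φ (Z ω) * χ (Z ω)) :=
    hφZ.of_abs_sub_le hεψZ (fun _ _ ↦ (hφχ.measurable.comp hZ).aestronglyMeasurable)
      fun ω ↦ hle (Z ω)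
  rw [← upperExp_const_mul hε.le]
  exact abs_upperExp_sub_le h𝒬 hφZ hφχZ hεψZ fun ω ↦ hle (Z ω)

theorem convergence_from_compact_support_general {l : Filter ι} [l.NeBot] (h𝒬 : 𝒬.Nonempty)
    {Z : ι → Ω → X} (hmeas : ∀ i, Measurable (Z i)) (hφ : Continuous φ) (hψ : 0 ≤ ψ)
    (hφψ : φ =o[cocompact X] ψ)
    (hmom : ∃ M : ℝ, ∀ᶠ i in l, HasFiniteUpperExp 𝒬 (fun ω ↦ ψ (Z i ω)) ∧
      upperExp 𝒬 (fun ω ↦ ψ (Z i ω)) ≤ M)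
    (hfin : ∀ᶠ i in l, HasFiniteUpperExp 𝒬 (fun ω ↦ φ (Z i ω)))
    (hcs : ∀ φ₁ : X → ℝ, Continuous φ₁ → HasCompactSupport φ₁ →
      ∃ L : ℝ, Tendsto (fun i ↦ upperExp 𝒬 (fun ω ↦ φ₁ (Z i ω))) l (𝓝 L)) :
    ∃ L : ℝ, Tendsto (fun i ↦ upperExp 𝒬 (fun ω ↦ φ (Z i ω))) l (𝓝 L) := by
  obtain ⟨M, hM⟩ := hmom
  refine exists_tendsto_of_forall_exists_dist_le fun ε hε ↦ ?_
  obtain ⟨δ, hδ, hδM⟩ := exists_pos_mul_lt hε M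
  obtain ⟨φ₁, hφ₁, hφ₁_supp, happrox⟩ :=
    exists_hasCompactSupport_abs_upperExp_sub_le h𝒬 hφ hψ hφψ hδ
  refine ⟨fun i ↦ upperExp 𝒬 (fun ω ↦ φ₁ (Z i ω)), hcs φ₁ hφ₁ hφ₁_supp, ?_⟩
  filter_upwards [hM, hfin] with i ⟨hψZ, hψM⟩ hφZ
  calc |upperExp 𝒬 (fun ω ↦ φ (Z i ω)) - upperExp 𝒬 (fun ω ↦ φ₁ (Z i ω))|
    _ ≤ δ * upperExp 𝒬 (fun ω ↦ ψ (Z i ω)) := happrox (Z i) (hmeas i) hψZ hφZ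
    _ ≤ δ * M := mul_le_mul_of_nonneg_left hψM hδ.le
    _ ≤ ε := by linarith

end Convergence

/-- If `sup_n E̅[|Z_n|^{p+1}] < ∞` for some `p ≥ 1` and `E̅[φ₁(Z_n)]` converges for
every bounded continuous `φ₁` with compact support, then `E̅[φ(Z_n)]` converges for
every continuous `φ` with `|φ(x)| ≤ C (1 + |x|^p)` for some `C > 0`. -/
theorem convergence_from_compact_support {Ω : Type*} [MeasurableSpace Ω]
    (𝒬 : Set (Measure Ω)) (h𝒬 : 𝒬.Nonempty)
    (hprob : ∀ P ∈ 𝒬, IsProbabilityMeasure P)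
    (Z : ℕ → Ω → ℝ) (hmeas : ∀ n, Measurable (Z n))
    (p : ℝ) (hp : 1 ≤ p)
    (hmom : ∃ M : ℝ, ∀ n : ℕ, 1 ≤ n →
      HasFiniteUpperExp 𝒬 (fun ω => |Z n ω| ^ (p + 1)) ∧
      upperExp 𝒬 (fun ω => |Z n ω| ^ (p + 1)) ≤ M)
    (hcs : ∀ φ₁ : ℝ → ℝ, Continuous φ₁ → HasCompactSupport φ₁ →
      ∃ L : ℝ, Tendsto (fun n => upperExp 𝒬 (fun ω => φ₁ (Z n ω))) atTop (𝓝 L)) :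
    ∀ φ : ℝ → ℝ, Continuous φ →
      (∃ C : ℝ, 0 < C ∧ ∀ x : ℝ, |φ x| ≤ C * (1 + |x| ^ p)) →
      (∀ n : ℕ, 1 ≤ n → HasFiniteUpperExp 𝒬 (fun ω => φ (Z n ω))) →
      ∃ L : ℝ, Tendsto (fun n => upperExp 𝒬 (fun ω => φ (Z n ω))) atTop (𝓝 L) := by
  rintro φ hφ ⟨C, -, hC⟩ hfin
  have hφ_growth : Asymptotics.IsLittleO (cocompact ℝ) φ fun x ↦ |x| ^ (p + 1) :=
    isLittleO_norm_rpow_cocompact_of_norm_le hC (by linarith) (lt_add_one p)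
  exact convergence_from_compact_support_general h𝒬 hmeas hφ (fun x ↦ by positivity) hφ_growth
    (hmom.imp fun _ hM ↦ eventually_atTop.2 ⟨1, hM⟩) (eventually_atTop.2 ⟨1, hfin⟩) hcs
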